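/- Let f : ℝ × ℝ → ℝ be continuously differentiable, let T > 0, and let x : ℝ → ℝ be a nonconstant T-periodic C² solution of ẍ(t) = f(x(t), ẋ(t)) with x(0) = A, ẋ(0) = 0, and x(t) ≤ A for all t, and assume ẋ(t) ≠ 0 for all t ∈ (0, T/2) with x strictly decreasing on [0, T/2] down to B := x(T/2) and ẋ(T/2) = 0. Then there exists a continuous function φ : [B, A] → ℝ, C¹ on (B, A), such that φ(A) = 0, ẋ(t) = φ(x(t)) for all t ∈ [0, T/2], φ(x)·φ′(x) = f(x, φ(x)) for all x ∈ (B, A), and ∫_x^A f(s, φ(s)) ds ≤ 0 for all x ∈ [B, A]. -/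

import Mathlib

/-!
Since `ẋ` does not vanish inside the half-period, Rolle's theorem makes `x` injective there, so
every quantity along the orbit is a function of the position `x`; let `φ` be the velocity so
expressed. The chain rule gives `φ' = ẍ / ẋ`, that is `φ φ' = f(x, φ)`, and integrating
`φ φ' = (φ² / 2)'` up to the turning point, where `φ = 0`, leaves `-φ(z)² / 2 ≤ 0`.
-/

open Set Function Topology

theorem continuousOn_invFunOn_image {X Y : Type*} [TopologicalSpace X] [TopologicalSpace Y]
    [Nonempty X] [T2Space Y] {x : X → Y} {s : Set X} (hs : IsCompact s) (hx : ContinuousOn x s)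
    (hinj : InjOn x s) : ContinuousOn (invFunOn x s) (x '' s) := by
  refine continuousOn_iff_isClosed.2 fun C hC ↦ ⟨x '' (s ∩ C), ?_, ?_⟩
  · exact ((hs.inter_right hC).image_of_continuousOn (hx.mono inter_subset_left)).isClosed
  · ext z
    constructor
    · rintro ⟨hzC, hz⟩
      exact ⟨⟨invFunOn x s z, ⟨invFunOn_mem hz, hzC⟩, invFunOn_eq hz⟩, hz⟩
    · rintro ⟨⟨t, ⟨hts, htC⟩, rfl⟩, hz⟩
      exact ⟨by rwa [mem_preimage, hinj.leftInvOn_invFunOn hts], hz⟩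

/-- The quantity `y` expressed as a function of the position `x` along the arc `s`, for `x`
injective on `s`. Taking `y = ẋ` gives the first-integral function `φ`. Its values outside
`x '' s` are junk. -/
noncomputable def byPosition {X Y Z : Type*} [Nonempty X] (x : X → Y) (y : X → Z) (s : Set X) :
    Y → Z :=
  y ∘ invFunOn x s

theorem byPosition_apply {X Y Z : Type*} [Nonempty X] {x : X → Y} {s : Set X} (y : X → Z)
    (hinj : InjOn x s) {t : X} (ht : t ∈ s) : byPosition x y s (x t) = y t :=
  congrArg y (hinj.leftInvOn_invFunOn ht)

theorem continuousOn_byPosition {X Y Z : Type*} [TopologicalSpace X] [TopologicalSpace Y]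
    [TopologicalSpace Z] [Nonempty X] [T2Space Y] {x : X → Y} {y : X → Z} {s : Set X}
    (hs : IsCompact s) (hx : ContinuousOn x s) (hinj : InjOn x s) (hy : ContinuousOn y s) :
    ContinuousOn (byPosition x y s) (x '' s) :=
  hy.comp (continuousOn_invFunOn_image hs hx hinj) fun _ hz ↦ invFunOn_mem hz

theorem hasDerivAt_byPosition {𝕜 : Type*} [NontriviallyNormedField 𝕜] {x y : 𝕜 → 𝕜} {s : Set 𝕜}
    {t x' y' : 𝕜} (hs : IsCompact s) (hxs : ContinuousOn x s) (hinj : InjOn x s) (ht : t ∈ s)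
    (himage : x '' s ∈ 𝓝 (x t)) (hx : HasDerivAt x x' t) (hx' : x' ≠ 0)
    (hy : HasDerivAt y y' t) : HasDerivAt (byPosition x y s) (y' / x') (x t) := by
  have hinv : invFunOn x s (x t) = t := hinj.leftInvOn_invFunOn ht
  have hinv_deriv : HasDerivAt (invFunOn x s) x'⁻¹ (x t) :=
    HasDerivAt.of_local_left_inverse ((continuousOn_invFunOn_image hs hxs hinj).continuousAt himage)
      (by rwa [hinv]) hx' (Filter.mem_of_superset himage fun _ hz ↦ invFunOn_eq hz)
  have hy_inv : HasDerivAt y y' (invFunOn x s (x t)) := by rwa [hinv]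
  rw [div_eq_mul_inv]
  exact hy_inv.comp (x t) hinv_deriv

section Interval

theorem injOn_of_deriv_ne_zero {s : Set ℝ} (hs : Convex ℝ s) {x : ℝ → ℝ} (hx : ContinuousOn x s)
    (hx' : ∀ t ∈ interior s, deriv x t ≠ 0) : InjOn x s := by
  intro u hu v hv heq
  wlog huv : u < v generalizing u v
  · exact (not_lt.1 huv).eq_or_lt.elim Eq.symm fun hvu ↦ (this hv hu heq.symm hvu).symm
  have hsub : Icc u v ⊆ s := hs.ordConnected.out hu hv
  obtain ⟨c, hc, hc0⟩ := exists_deriv_eq_zero huv (hx.mono hsub) heq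
  exact absurd hc0 (hx' c (interior_maximal (Ioo_subset_Icc_self.trans hsub) isOpen_Ioo hc))

theorem uIcc_sdiff_both {β : Type*} [LinearOrder β] (u v : β) : uIcc u v \ {u, v} = uIoo u v := by
  rcases le_total u v with h | h
  · rw [uIcc_of_le h, uIoo_of_le h, Icc_sdiff_both]
  · rw [uIcc_of_ge h, uIoo_of_ge h, pair_comm, Icc_sdiff_both]

variable {α β : Type*} [ConditionallyCompleteLinearOrder α] [DenselyOrdered α]
  [TopologicalSpace α] [OrderTopology α] [LinearOrder β] [TopologicalSpace β] [OrderTopology β]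
  {x : α → β} {a b : α}

theorem image_Icc_eq_uIcc_of_injOn (hab : a ≤ b) (hx : ContinuousOn x (Icc a b))
    (hinj : InjOn x (Icc a b)) : x '' Icc a b = uIcc (x a) (x b) := by
  have hmono := hx.strictMonoOn_of_injOn_Icc' hab hinj
  rw [← uIcc_of_le hab] at hx hmono ⊢
  exact hmono.elim (hx.image_uIcc_of_monotoneOn ·.monotoneOn)
    (hx.image_uIcc_of_antitoneOn ·.antitoneOn)

theorem image_Ioo_eq_uIoo_of_injOn (hab : a ≤ b) (hx : ContinuousOn x (Icc a b))
    (hinj : InjOn x (Icc a b)) : x '' Ioo a b = uIoo (x a) (x b) := by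
  have hends : {a, b} ⊆ Icc a b := pair_subset (left_mem_Icc.2 hab) (right_mem_Icc.2 hab)
  rw [← Icc_sdiff_both, hinj.image_sdiff_subset hends, image_pair,
    image_Icc_eq_uIcc_of_injOn hab hx hinj, uIcc_sdiff_both]

theorem image_Icc_mem_nhds_of_injOn (hx : ContinuousOn x (Icc a b)) (hinj : InjOn x (Icc a b))
    {t : α} (ht : t ∈ Ioo a b) : x '' Icc a b ∈ 𝓝 (x t) := by
  have hab : a ≤ b := (ht.1.trans ht.2).le
  refine Filter.mem_of_superset ?_ (image_mono Ioo_subset_Icc_self)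
  have hxt : x t ∈ x '' Ioo a b := mem_image_of_mem x ht
  rw [image_Ioo_eq_uIoo_of_injOn hab hx hinj] at hxt ⊢
  exact isOpen_Ioo.mem_nhds hxt

end Interval

theorem contDiffOn_one_of_hasDerivAt {𝕜 F : Type*} [NontriviallyNormedField 𝕜]
    [NormedAddCommGroup F] [NormedSpace 𝕜 F] {g g' : 𝕜 → F} {s : Set 𝕜} (hs : IsOpen s)
    (hg : ∀ z ∈ s, HasDerivAt g (g' z) z) (hg' : ContinuousOn g' s) : ContDiffOn 𝕜 1 g s := by
  refine (contDiffOn_one_iff_derivWithin hs.uniqueDiffOn).2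
    ⟨fun z hz ↦ (hg z hz).differentiableAt.differentiableWithinAt, hg'.congr fun z hz ↦ ?_⟩
  rw [derivWithin_of_isOpen hs hz, (hg z hz).deriv]

theorem integral_mul_deriv_self {φ φ' : ℝ → ℝ} {u v : ℝ} (hφ : ContinuousOn φ (uIcc u v))
    (hφ' : ∀ z ∈ uIoo u v, HasDerivAt φ (φ' z) z)
    (hint : IntervalIntegrable (fun z ↦ φ z * φ' z) MeasureTheory.volume u v) :
    ∫ z in u..v, φ z * φ' z = φ v ^ 2 / 2 - φ u ^ 2 / 2 := by
  refine intervalIntegral.integral_eq_sub_of_hasDeriv_right (f := fun z ↦ φ z ^ 2 / 2)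
    ((hφ.pow 2).div_const 2) (fun z hz ↦ ?_) hint
  refine ((((hφ' z hz).pow 2).div_const 2).congr_deriv ?_).hasDerivWithinAt
  ring

theorem integral_eq_half_sq_sub_sq {φ F : ℝ → ℝ} {u v : ℝ} (hφ : ContinuousOn φ (uIcc u v))
    (hF : ContinuousOn F (uIcc u v)) (hφ' : ∀ z ∈ uIoo u v, DifferentiableAt ℝ φ z)
    (hmul : ∀ z ∈ uIoo u v, φ z * deriv φ z = F z) :
    ∫ z in u..v, F z = φ v ^ 2 / 2 - φ u ^ 2 / 2 := by
  rw [← intervalIntegral.integral_congr_uIoo hmul]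
  exact integral_mul_deriv_self hφ (fun z hz ↦ (hφ' z hz).hasDerivAt)
    (hF.intervalIntegrable.congr_uIoo fun z hz ↦ (hmul z hz).symm)

section FirstIntegral

/-- The first-integral function `φ` of the arc of `x` over `[a, b]`: the velocity `ẋ` as a function
of the position. -/
noncomputable def firstIntegral (x : ℝ → ℝ) (a b : ℝ) : ℝ → ℝ :=
  byPosition x (deriv x) (Icc a b)

variable {f : ℝ × ℝ → ℝ} {x : ℝ → ℝ} {a b : ℝ}

theorem firstIntegral_apply (hinj : InjOn x (Icc a b)) {t : ℝ} (ht : t ∈ Icc a b) :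
    firstIntegral x a b (x t) = deriv x t :=
  byPosition_apply _ hinj ht

theorem continuousOn_firstIntegral (hab : a ≤ b) (hx : ContDiff ℝ 1 x)
    (hinj : InjOn x (Icc a b)) : ContinuousOn (firstIntegral x a b) (uIcc (x a) (x b)) := by
  have hxc := hx.continuous.continuousOn (s := Icc a b)
  rw [← image_Icc_eq_uIcc_of_injOn hab hxc hinj]
  exact continuousOn_byPosition isCompact_Icc hxc hinj (hx.continuous_deriv le_rfl).continuousOn

theorem continuousOn_force_firstIntegral (hab : a ≤ b) (hx : ContDiff ℝ 2 x)
    (hODE : ∀ t ∈ Icc a b, deriv (deriv x) t = f (x t, deriv x t)) (hinj : InjOn x (Icc a b)) :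
    ContinuousOn (fun z ↦ f (z, firstIntegral x a b z)) (uIcc (x a) (x b)) := by
  have hxc := hx.continuous.continuousOn (s := Icc a b)
  have hacc : Continuous (deriv (deriv x)) := (ContDiff.deriv' hx).continuous_deriv le_rfl
  rw [← image_Icc_eq_uIcc_of_injOn hab hxc hinj]
  refine (continuousOn_byPosition isCompact_Icc hxc hinj hacc.continuousOn).congr
    (forall_mem_image.2 fun t ht ↦ ?_)
  simp only [firstIntegral_apply hinj ht, byPosition_apply _ hinj ht, hODE t ht]

theorem firstIntegral_ne_zero (hab : a ≤ b) (hx : ContinuousOn x (Icc a b))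
    (hinj : InjOn x (Icc a b)) (hvne : ∀ t ∈ Ioo a b, deriv x t ≠ 0) {z : ℝ}
    (hz : z ∈ uIoo (x a) (x b)) : firstIntegral x a b z ≠ 0 := by
  rw [← image_Ioo_eq_uIoo_of_injOn hab hx hinj] at hz
  obtain ⟨t, ht, rfl⟩ := hz
  rw [firstIntegral_apply hinj (Ioo_subset_Icc_self ht)]
  exact hvne t ht

theorem hasDerivAt_firstIntegral (hab : a ≤ b) (hx : ContDiff ℝ 2 x)
    (hODE : ∀ t ∈ Ioo a b, deriv (deriv x) t = f (x t, deriv x t)) (hinj : InjOn x (Icc a b))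
    (hvne : ∀ t ∈ Ioo a b, deriv x t ≠ 0) {z : ℝ} (hz : z ∈ uIoo (x a) (x b)) :
    HasDerivAt (firstIntegral x a b)
      (f (z, firstIntegral x a b z) / firstIntegral x a b z) z := by
  have hxc := hx.continuous.continuousOn (s := Icc a b)
  have hv : ContDiff ℝ 1 (deriv x) := hx.deriv'
  rw [← image_Ioo_eq_uIoo_of_injOn hab hxc hinj] at hz
  obtain ⟨t, ht, rfl⟩ := hz
  have htIcc := Ioo_subset_Icc_self ht
  rw [firstIntegral_apply hinj htIcc, ← hODE t ht]
  exact hasDerivAt_byPosition isCompact_Icc hxc hinj htIcc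
    (image_Icc_mem_nhds_of_injOn hxc hinj ht) (hx.differentiable two_ne_zero t).hasDerivAt
    (hvne t ht) (hv.differentiable one_ne_zero t).hasDerivAt

end FirstIntegral

theorem first_integral_necessity_general {f : ℝ × ℝ → ℝ} {x : ℝ → ℝ} {a b : ℝ} (hab : a ≤ b)
    (hx : ContDiff ℝ 2 x) (hODE : ∀ t ∈ Icc a b, deriv (deriv x) t = f (x t, deriv x t))
    (hva : deriv x a = 0) (hvne : ∀ t ∈ Ioo a b, deriv x t ≠ 0) :
    ∃ φ : ℝ → ℝ,
      ContinuousOn φ (uIcc (x a) (x b)) ∧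
      ContDiffOn ℝ 1 φ (uIoo (x a) (x b)) ∧
      φ (x a) = 0 ∧
      (∀ t ∈ Icc a b, deriv x t = φ (x t)) ∧
      (∀ z ∈ uIoo (x a) (x b), φ z * deriv φ z = f (z, φ z)) ∧
      (∀ z ∈ uIcc (x a) (x b), (∫ s in z..x a, f (s, φ s)) ≤ 0) := by
  have hxc : ContinuousOn x (Icc a b) := hx.continuous.continuousOn
  have hinj : InjOn x (Icc a b) :=
    injOn_of_deriv_ne_zero (convex_Icc a b) hxc (by rwa [interior_Icc])
  set φ := firstIntegral x a b
  have hφ : ContinuousOn φ (uIcc (x a) (x b)) :=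
    continuousOn_firstIntegral hab (hx.of_le one_le_two) hinj
  have hF : ContinuousOn (fun z ↦ f (z, φ z)) (uIcc (x a) (x b)) :=
    continuousOn_force_firstIntegral hab hx hODE hinj
  have hφ0 : ∀ z ∈ uIoo (x a) (x b), φ z ≠ 0 := fun _ ↦ firstIntegral_ne_zero hab hxc hinj hvne
  have hφ' : ∀ z ∈ uIoo (x a) (x b), HasDerivAt φ (f (z, φ z) / φ z) z := fun _ ↦
    hasDerivAt_firstIntegral hab hx (fun t ht ↦ hODE t (Ioo_subset_Icc_self ht)) hinj hvne
  have hmul : ∀ z ∈ uIoo (x a) (x b), φ z * deriv φ z = f (z, φ z) := fun z hz ↦ by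
    rw [(hφ' z hz).deriv, mul_div_cancel₀ _ (hφ0 z hz)]
  have hφa : φ (x a) = 0 := (firstIntegral_apply hinj (left_mem_Icc.2 hab)).trans hva
  refine ⟨φ, hφ, ?_, hφa, fun t ht ↦ (firstIntegral_apply hinj ht).symm, hmul, fun z hz ↦ ?_⟩
  · exact contDiffOn_one_of_hasDerivAt isOpen_Ioo hφ' <|
      (hF.mono uIoo_subset_uIcc_self).div (hφ.mono uIoo_subset_uIcc_self) hφ0
  · have hclosed : uIcc z (x a) ⊆ uIcc (x a) (x b) := uIcc_subset_uIcc hz left_mem_uIcc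
    have hopen : uIoo z (x a) ⊆ uIoo (x a) (x b) :=
      Ioo_subset_Ioo (le_inf hz.1 inf_le_left) (sup_le hz.2 le_sup_left)
    rw [integral_eq_half_sq_sub_sq (hφ.mono hclosed) (hF.mono hclosed)
      (fun s hs ↦ (hφ' s (hopen hs)).differentiableAt) (fun s hs ↦ hmul s (hopen hs)), hφa]
    linarith [sq_nonneg (φ z)]

/-- Theorem 1 (necessity): a nonconstant `T`-periodic C² solution of `ẍ = f(x, ẋ)` with
amplitude `A = x 0`, `ẋ 0 = 0`, strictly decreasing on `[0, T/2]` down to `B = x (T/2)`,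
admits a first-integral function `φ` with `ẋ = φ(x)` along `[0, T/2]`, satisfying
`φ·φ' = f(x, φ(x))` and `∫_x^A f(s, φ(s)) ds ≤ 0`. -/
theorem first_integral_necessity
    (f : ℝ × ℝ → ℝ) (hf : ContDiff ℝ 1 f)
    (T : ℝ) (hT : 0 < T) (x : ℝ → ℝ) (A B : ℝ)
    (hx : ContDiff ℝ 2 x)
    (hper : Function.Periodic x T)
    (hnc : ∃ t s : ℝ, x t ≠ x s)
    (hODE : ∀ t : ℝ, deriv (deriv x) t = f (x t, deriv x t))
    (hx0 : x 0 = A) (hv0 : deriv x 0 = 0)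
    (hmax : ∀ t : ℝ, x t ≤ A)
    (hvne : ∀ t ∈ Set.Ioo (0 : ℝ) (T / 2), deriv x t ≠ 0)
    (hdec : StrictAntiOn x (Set.Icc 0 (T / 2)))
    (hB : x (T / 2) = B)
    (hvhalf : deriv x (T / 2) = 0) :
    ∃ φ : ℝ → ℝ,
      ContinuousOn φ (Set.Icc B A) ∧
      ContDiffOn ℝ 1 φ (Set.Ioo B A) ∧
      φ A = 0 ∧
      (∀ t ∈ Set.Icc (0 : ℝ) (T / 2), deriv x t = φ (x t)) ∧
      (∀ z ∈ Set.Ioo B A, φ z * deriv φ z = f (z, φ z)) ∧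
      (∀ z ∈ Set.Icc B A, (∫ s in z..A, f (s, φ s)) ≤ 0) := by
  have hhalf : 0 ≤ T / 2 := by positivity
  have hBA : B ≤ A := hB ▸ hmax _
  simpa only [hx0, hB, uIcc_of_ge hBA, uIoo_of_ge hBA] using
    first_integral_necessity_general hhalf hx (fun t _ ↦ hODE t) hv0 hvne
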